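/- Let G be a bounded domain in ℂⁿ (n ≥ 2) and let K be a compact subset of G such that through every point z ∈ ℂⁿ ∖ K there passes a complex affine line disjoint from K. Then G ∖ K is a domain, and the Kobayashi distance k_{G∖K} is quasi-isometrically equivalent to the restriction of k_G to (G∖K) × (G∖K): there exist constants c₁ ≥ 1 and c₂ ≥ 0 such that k_G(z,w) ≤ k_{G∖K}(z,w) ≤ c₁·k_G(z,w) + c₂ for all z, w ∈ G∖K. In particular, if (G, k_G) is Gromov hyperbolic, then so is (G∖K, k_{G∖K}). -/

import Mathlib

open Metric Set

noncomputable section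

/-- Inverse hyperbolic tangent: `artanh t = (1/2) * log ((1+t)/(1-t))`. -/
def artanh (x : ℝ) : ℝ := Real.log ((1 + x) / (1 - x)) / 2

variable {E : Type*} [NormedAddCommGroup E] [NormedSpace ℂ E]

/-- The Lempert function of a set `D ⊆ E`:
`l_D(z,w) = inf { artanh |α| : ∃ φ : 𝔻 → D holomorphic, φ 0 = z, φ α = w }`. -/
def lempert (D : Set E) (z w : E) : ℝ :=
  sInf { r : ℝ | ∃ α : ℂ, ‖α‖ < 1 ∧
    (∃ φ : ℂ → E, DifferentiableOn ℂ φ (ball 0 1) ∧ MapsTo φ (ball 0 1) D ∧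
      φ 0 = z ∧ φ α = w) ∧ r = artanh ‖α‖ }

/-- The Kobayashi pseudodistance: infimum of `∑ l_D(z_{i-1}, z_i)` over all finite
chains of points `z = c 0, c 1, …, c m = w` in `D`. -/
def kobayashi (D : Set E) (z w : E) : ℝ :=
  sInf { r : ℝ | ∃ (m : ℕ) (c : ℕ → E), c 0 = z ∧ c m = w ∧ (∀ i ≤ m, c i ∈ D) ∧
    r = ∑ i ∈ Finset.range m, lempert D (c i) (c (i + 1)) }

/-- The Carathéodory pseudodistance:
`c_D(z,w) = sup { artanh |f w| : f : D → 𝔻 holomorphic, f z = 0 }`. -/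
def caratheodory (D : Set E) (z w : E) : ℝ :=
  sSup { r : ℝ | ∃ f : E → ℂ, DifferentiableOn ℂ f D ∧ MapsTo f D (ball 0 1) ∧
    f z = 0 ∧ r = artanh ‖f w‖ }

/-- `(D, d)` is Gromov hyperbolic if
`sup_{p,q,x,w ∈ D} ( min{(p,x)_w, (x,q)_w} − (p,q)_w ) < ∞`, where
`(x,y)_z = d x z + d z y - d x y` is the Gromov product. -/
def GromovHyperbolicWith (D : Set E) (d : E → E → ℝ) : Prop :=
  ∃ C : ℝ, ∀ p ∈ D, ∀ q ∈ D, ∀ x ∈ D, ∀ w ∈ D,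
    min (d p w + d w x - d p x) (d x w + d w q - d x q) - (d p w + d w q - d p q) ≤ C

end


section Part1
variable {E : Type*} [NormedAddCommGroup E] [NormedSpace ℂ E]

lemma artanh_tanh' (l : ℝ) : artanh (Real.tanh l) = l := by
  have h := Real.abs_tanh_lt_one l
  rw [abs_lt] at h
  have h2 := Real.artanh_tanh l
  rw [Real.artanh_eq_half_log ⟨h.1.le, h.2.le⟩] at h2
  rw [artanh]; linarith

lemma tanh_artanh' {x : ℝ} (h : -1 < x) (h' : x < 1) : Real.tanh (artanh x) = x := by
  have h2 := Real.tanh_artanh (x := x) ⟨h, h'⟩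
  rw [Real.artanh_eq_half_log ⟨h.le, h'.le⟩] at h2
  rw [artanh]
  convert h2 using 2; ring

lemma artanh_nonneg' {x : ℝ} (h : 0 ≤ x) (h' : x < 1) : 0 ≤ artanh x := by
  unfold artanh
  have : 1 ≤ (1 + x) / (1 - x) := by
    rw [le_div_iff₀ (by linarith)]; linarith
  have := Real.log_nonneg this
  linarith

lemma artanh_diff_le {x y : ℝ} (hx : 0 ≤ x) (hxy : x ≤ y) (hy : y ≤ 1 / 2) :
    artanh y ≤ artanh x + 2 * (y - x) := by
  unfold artanh
  rw [Real.log_div (by linarith) (by linarith), Real.log_div (by linarith) (by linarith)]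
  have h1 : Real.log (1 + y) - Real.log (1 + x) ≤ y - x := by
    rw [← Real.log_div (by linarith) (by linarith)]
    refine (Real.log_le_sub_one_of_pos (by apply div_pos <;> linarith)).trans ?_
    rw [div_sub_one (by linarith), div_le_iff₀ (by linarith)]
    nlinarith
  have h2 : Real.log (1 - x) - Real.log (1 - y) ≤ 2 * (y - x) := by
    rw [← Real.log_div (by linarith) (by linarith)]
    refine (Real.log_le_sub_one_of_pos (by apply div_pos <;> linarith)).trans ?_
    rw [div_sub_one (by linarith), div_le_iff₀ (by linarith)]
    nlinarith
  linarith

lemma tanh_nonneg' {l : ℝ} (h : 0 ≤ l) : 0 ≤ Real.tanh l := by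
  rw [Real.tanh_eq_sinh_div_cosh]
  exact div_nonneg (Real.sinh_nonneg_iff.2 h) (Real.cosh_pos l).le

lemma tanh_le_two_mul {l : ℝ} (h : 0 ≤ l) : Real.tanh l ≤ 2 * l := by
  have h1 := tanh_nonneg' h
  have h2 := Real.tanh_lt_one l
  have h3 := artanh_tanh' l
  set t := Real.tanh l
  unfold artanh at h3
  rw [Real.log_div (by linarith) (by linarith)] at h3
  have h4 : 0 ≤ Real.log (1 + t) := Real.log_nonneg (by linarith)
  have h5 := Real.log_le_sub_one_of_pos (x := 1 - t) (by linarith)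
  linarith

lemma tanh_sub_formula (u v : ℝ) :
    (Real.tanh (v - u) + Real.tanh u) = Real.tanh v * (1 + Real.tanh u * Real.tanh (v - u)) := by
  have key : v = (v - u) + u := by ring
  have h1 := (Real.cosh_pos (v - u)).ne'
  have h2 := (Real.cosh_pos u).ne'
  have h3 := (Real.cosh_pos ((v - u) + u)).ne'
  have : Real.tanh v = Real.tanh ((v - u) + u) := by rw [← key]
  rw [this]
  simp only [Real.tanh_eq_sinh_div_cosh]
  generalize v - u = d at *
  field_simp
  rw [Real.sinh_add, Real.cosh_add]

lemma one_sub_le_of_artanh {t r : ℝ} (h0 : 0 ≤ t) (h1 : t < 1) (h : r ≤ artanh t) :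
    1 - t ≤ 2 * Real.exp (-2 * r) := by
  unfold artanh at h
  have h2 : Real.exp (2 * r) ≤ (1 + t) / (1 - t) := by
    rw [← Real.le_log_iff_exp_le (by apply div_pos <;> linarith)]; linarith
  rw [le_div_iff₀ (by linarith)] at h2
  have h3 : Real.exp (-2 * r) * Real.exp (2 * r) = 1 := by
    rw [← Real.exp_add]; simp
  have h4 := Real.exp_pos (-2 * r)
  calc 1 - t = Real.exp (-2 * r) * (Real.exp (2 * r) * (1 - t)) := by
        rw [← mul_assoc, h3, one_mul]
    _ ≤ Real.exp (-2 * r) * (1 + t) := by gcongr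
    _ ≤ _ := by nlinarith

/-- a disc link of hyperbolic length `l` -/
def Lk (D : Set E) (a b : E) (l : ℝ) : Prop :=
  0 ≤ l ∧ ∃ φ : ℂ → E, DifferentiableOn ℂ φ (ball 0 1) ∧ MapsTo φ (ball 0 1) D ∧
    φ 0 = a ∧ φ ((Real.tanh l : ℝ) : ℂ) = b

lemma lempert_nonneg (D : Set E) (z w : E) : 0 ≤ lempert D z w := by
  apply Real.sInf_nonneg
  rintro r ⟨α, hα, -, rfl⟩
  exact artanh_nonneg' (norm_nonneg _) hα

lemma lempert_le_of_disc {D : Set E} {z w : E} {α : ℂ} (hα : ‖α‖ < 1) {φ : ℂ → E}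
    (h1 : DifferentiableOn ℂ φ (ball 0 1)) (h2 : MapsTo φ (ball 0 1) D)
    (h3 : φ 0 = z) (h4 : φ α = w) : lempert D z w ≤ artanh ‖α‖ := by
  apply csInf_le
  · refine ⟨0, ?_⟩
    rintro r ⟨α, hα, -, rfl⟩
    exact artanh_nonneg' (norm_nonneg _) hα
  · exact ⟨α, hα, ⟨φ, h1, h2, h3, h4⟩, rfl⟩

lemma norm_ofReal_tanh {l : ℝ} (h : 0 ≤ l) : ‖((Real.tanh l : ℝ) : ℂ)‖ = Real.tanh l := by
  rw [Complex.norm_real, Real.norm_of_nonneg (tanh_nonneg' h)]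

lemma tanh_mem_ball (l : ℝ) : ((Real.tanh l : ℝ) : ℂ) ∈ ball (0:ℂ) 1 := by
  rw [mem_ball_zero_iff, Complex.norm_real]
  exact Real.abs_tanh_lt_one l

lemma Lk.lempert_le {D : Set E} {a b : E} {l : ℝ} (h : Lk D a b l) : lempert D a b ≤ l := by
  obtain ⟨h0, φ, h1, h2, h3, h4⟩ := h
  have := lempert_le_of_disc (by simpa using tanh_mem_ball l) h1 h2 h3 h4
  rwa [norm_ofReal_tanh h0, artanh_tanh'] at this

lemma Lk.left_mem {D : Set E} {a b : E} {l : ℝ} (h : Lk D a b l) : a ∈ D := by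
  obtain ⟨h0, φ, h1, h2, h3, h4⟩ := h
  rw [← h3]; exact h2 (by simp)

lemma Lk.right_mem {D : Set E} {a b : E} {l : ℝ} (h : Lk D a b l) : b ∈ D := by
  obtain ⟨h0, φ, h1, h2, h3, h4⟩ := h
  rw [← h4]; exact h2 (tanh_mem_ball l)

lemma Lk_of_disc {D : Set E} {z w : E} {α : ℂ} (hα : ‖α‖ < 1) {φ : ℂ → E}
    (h1 : DifferentiableOn ℂ φ (ball 0 1)) (h2 : MapsTo φ (ball 0 1) D)
    (h3 : φ 0 = z) (h4 : φ α = w) : Lk D z w (artanh ‖α‖) := by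
  obtain ⟨u, hu, hu2⟩ : ∃ u : ℂ, ‖u‖ = 1 ∧ (‖α‖ : ℂ) * u = α := by
    by_cases h : α = 0
    · exact ⟨1, by simp, by simp [h]⟩
    · have : (‖α‖ : ℂ) ≠ 0 := by simpa using h
      refine ⟨α / ‖α‖, ?_, by field_simp⟩
      simp [h]
  have hm : MapsTo (fun ζ : ℂ => ζ * u) (ball 0 1) (ball 0 1) := by
    intro ζ hζ
    simpa [hu] using hζ
  refine ⟨artanh_nonneg' (norm_nonneg _) hα, fun ζ => φ (ζ * u), ?_, ?_, by simpa using h3, ?_⟩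
  · exact h1.comp (by fun_prop) hm
  · exact fun ζ hζ => h2 (hm hζ)
  · rw [tanh_artanh' (by linarith [norm_nonneg α]) hα]
    simpa [hu2] using h4

lemma exists_Lk_lt {D : Set E} {z w : E} {r : ℝ}
    (hne : ∃ l, Lk D z w l) (h : lempert D z w < r) : ∃ l < r, Lk D z w l := by
  unfold lempert at h
  obtain ⟨l, h0, φ, h1, h2, h3, h4⟩ := hne
  obtain ⟨s, hs, hlt⟩ := exists_lt_of_csInf_lt (by
    exact ⟨_, _, by simpa using tanh_mem_ball l, ⟨φ, h1, h2, h3, h4⟩, rfl⟩) h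
  obtain ⟨α, hα, ⟨φ, h1, h2, h3, h4⟩, rfl⟩ := hs
  exact ⟨_, hlt, Lk_of_disc hα h1 h2 h3 h4⟩

lemma norm_one_add_mul_sub (a : ℝ) (ζ : ℂ) :
    ‖1 + a * ζ‖ ^ 2 - ‖ζ + a‖ ^ 2 = (1 - a ^ 2) * (1 - ‖ζ‖ ^ 2) := by
  simp only [Complex.sq_norm, Complex.normSq_apply]
  simp
  ring

lemma Lk_two {D : Set E} {φ : ℂ → E} (h1 : DifferentiableOn ℂ φ (ball 0 1))
    (h2 : MapsTo φ (ball 0 1) D) {u v : ℝ} (huv : u ≤ v) :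
    Lk D (φ ((Real.tanh u : ℝ) : ℂ)) (φ ((Real.tanh v : ℝ) : ℂ)) (v - u) := by
  have ha := Real.abs_tanh_lt_one u
  have hf := tanh_sub_formula u v
  set a := Real.tanh u
  have ha2 : a ^ 2 < 1 := by rw [← sq_abs]; nlinarith [abs_nonneg a]
  have key : ∀ ζ ∈ ball (0:ℂ) 1, ‖ζ + a‖ < ‖1 + a * ζ‖ := by
    intro ζ hζ
    have h := norm_one_add_mul_sub a ζ
    simp at hζ
    have h3 : 0 < (1 - a ^ 2) * (1 - ‖ζ‖ ^ 2) :=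
      mul_pos (by linarith) (by nlinarith [norm_nonneg ζ])
    exact lt_of_pow_lt_pow_left₀ 2 (norm_nonneg _) (by linarith)
  have hne : ∀ ζ ∈ ball (0:ℂ) 1, (1 + a * ζ) ≠ 0 := fun ζ hζ h => by
    have := key ζ hζ
    rw [h, norm_zero] at this
    exact absurd this (not_lt.2 (norm_nonneg _))
  have hm : MapsTo (fun ζ : ℂ => (ζ + a) / (1 + a * ζ)) (ball 0 1) (ball 0 1) := by
    intro ζ hζ
    have := key ζ hζ
    simp only [mem_ball_zero_iff, norm_div]
    rw [div_lt_one (lt_of_le_of_lt (norm_nonneg _) this)]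
    exact this
  refine ⟨by linarith, fun ζ => φ ((ζ + a) / (1 + a * ζ)), ?_, fun ζ hζ => h2 (hm hζ), ?_, ?_⟩
  · refine h1.comp ?_ hm
    exact DifferentiableOn.div (by fun_prop) (by fun_prop) hne
  · simp
  · show φ _ = φ _
    congr 1
    rw [div_eq_iff (hne _ (tanh_mem_ball _))]
    exact_mod_cast hf

lemma Lk.symm {D : Set E} {a b : E} {l : ℝ} (h : Lk D a b l) : Lk D b a l := by
  obtain ⟨h0, φ, h1, h2, h3, h4⟩ := h
  have hm : MapsTo (fun ζ : ℂ => -ζ) (ball 0 1) (ball 0 1) := fun ζ hζ => by simpa using hζ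
  have := Lk_two (D := D) (φ := fun ζ => φ (-ζ)) (h1.comp (by fun_prop) hm)
    (fun ζ hζ => h2 (hm hζ)) (u := -l) (v := 0) (by linarith)
  simpa [h3, h4, -Complex.ofReal_tanh] using this

lemma Lk.split {D : Set E} {a b : E} {l u : ℝ} (h : Lk D a b l) (hu : 0 ≤ u) (hul : u ≤ l) :
    ∃ c, Lk D a c u ∧ Lk D c b (l - u) := by
  obtain ⟨h0, φ, h1, h2, h3, h4⟩ := h
  refine ⟨φ ((Real.tanh u : ℝ) : ℂ), ?_, ?_⟩
  · simpa [h3] using Lk_two h1 h2 (u := 0) (v := u) hu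
  · simpa [h4, -Complex.ofReal_tanh] using Lk_two h1 h2 (u := u) (v := l) hul

lemma Lk.mono {D D' : Set E} (hD : D ⊆ D') {a b : E} {l : ℝ} (h : Lk D a b l) : Lk D' a b l := by
  obtain ⟨h0, φ, h1, h2, h3, h4⟩ := h
  exact ⟨h0, φ, h1, h2.mono_right hD, h3, h4⟩

/-- any two points of `D` are joined by a disc -/
def DC (D : Set E) : Prop := ∀ a ∈ D, ∀ b ∈ D, ∃ l, Lk D a b l

lemma kob_bdd (D : Set E) (z w : E) :
    BddBelow { r : ℝ | ∃ (m : ℕ) (c : ℕ → E), c 0 = z ∧ c m = w ∧ (∀ i ≤ m, c i ∈ D) ∧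
    r = ∑ i ∈ Finset.range m, lempert D (c i) (c (i + 1)) } := by
  refine ⟨0, ?_⟩
  rintro r ⟨m, c, -, -, -, rfl⟩
  exact Finset.sum_nonneg fun i _ => lempert_nonneg _ _ _

lemma kob_ne {D : Set E} {z w : E} (hz : z ∈ D) (hw : w ∈ D) :
    { r : ℝ | ∃ (m : ℕ) (c : ℕ → E), c 0 = z ∧ c m = w ∧ (∀ i ≤ m, c i ∈ D) ∧
    r = ∑ i ∈ Finset.range m, lempert D (c i) (c (i + 1)) }.Nonempty := by
  refine ⟨_, 1, fun i => if i = 0 then z else w, by simp, by simp, ?_, rfl⟩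
  intro i _
  by_cases h : i = 0 <;> simp [h, hz, hw]

lemma kob_nonneg (D : Set E) (z w : E) : 0 ≤ kobayashi D z w := by
  apply Real.sInf_nonneg
  rintro r ⟨m, c, -, -, -, rfl⟩
  exact Finset.sum_nonneg fun i _ => lempert_nonneg _ _ _

lemma kob_le_lempert {D : Set E} {z w : E} (hz : z ∈ D) (hw : w ∈ D) :
    kobayashi D z w ≤ lempert D z w := by
  apply csInf_le (kob_bdd D z w)
  refine ⟨1, fun i => if i = 0 then z else w, by simp, by simp, ?_, by simp⟩
  intro i _
  by_cases h : i = 0 <;> simp [h, hz, hw]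

lemma kob_self {D : Set E} {z : E} (hz : z ∈ D) : kobayashi D z z = 0 := by
  apply le_antisymm _ (kob_nonneg _ _ _)
  apply csInf_le (kob_bdd D z z)
  exact ⟨0, fun _ => z, rfl, rfl, fun _ _ => hz, by simp⟩

lemma Lk.kob_le {D : Set E} {a b : E} {l : ℝ} (h : Lk D a b l) : kobayashi D a b ≤ l :=
  (kob_le_lempert h.left_mem h.right_mem).trans h.lempert_le

/-- chains of short links -/
inductive Ch (D : Set E) (h : ℝ) (w : E) : E → ℝ → Prop
  | nil : w ∈ D → Ch D h w w 0
  | cons {a b : E} {l R : ℝ} : Lk D a b l → l ≤ h → Ch D h w b R → Ch D h w a (l + R)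

lemma Ch.mem {D : Set E} {h : ℝ} {w a : E} {R : ℝ} (H : Ch D h w a R) : a ∈ D := by
  cases H with
  | nil h => exact h
  | cons h _ _ => exact h.left_mem

lemma Ch.link {D : Set E} {h : ℝ} (hh : 0 < h) {w b : E} {R : ℝ} (H : Ch D h w b R) :
    ∀ (N : ℕ) {a : E} {l : ℝ}, l ≤ N * h → Lk D a b l → Ch D h w a (l + R) := by
  intro N
  induction N with
  | zero =>
    intro a l hl hk
    exact Ch.cons hk (by simp at hl; linarith) H
  | succ N ih =>
    intro a l hl hk
    by_cases h1 : l ≤ h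
    · exact Ch.cons hk h1 H
    · obtain ⟨c, hc1, hc2⟩ := hk.split hh.le (by linarith)
      have := Ch.cons hc1 le_rfl (ih (by push_cast at hl; linarith) hc2)
      convert this using 1; ring

lemma Ch.link' {D : Set E} {h : ℝ} (hh : 0 < h) {w b : E} {R : ℝ} (H : Ch D h w b R)
    {a : E} {l : ℝ} (hk : Lk D a b l) : Ch D h w a (l + R) := by
  obtain ⟨N, hN⟩ := exists_nat_ge (l / h)
  exact Ch.link hh H N ((div_le_iff₀ hh).1 hN) hk

lemma Ch_of_chain {D : Set E} (hD : DC D) {h : ℝ} (hh : 0 < h) : ∀ (m : ℕ) (c : ℕ → E),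
    (∀ i ≤ m, c i ∈ D) → ∀ ε > 0,
    ∃ R, R < (∑ i ∈ Finset.range m, lempert D (c i) (c (i + 1))) + ε ∧ Ch D h (c m) (c 0) R := by
  intro m
  induction m with
  | zero =>
    intro c hc ε hε
    exact ⟨0, by simpa using hε, Ch.nil (hc 0 le_rfl)⟩
  | succ m ih =>
    intro c hc ε hε
    obtain ⟨R, hR, hR2⟩ := ih (fun i => c (i + 1)) (fun i hi => hc _ (by omega)) (ε / 2)
      (by linarith)
    obtain ⟨l, hl, hl2⟩ := exists_Lk_lt (r := lempert D (c 0) (c 1) + ε / 2)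
      (hD (c 0) (hc 0 (by omega)) (c 1) (hc 1 (by omega))) (by linarith)
    refine ⟨l + R, ?_, Ch.link' hh hR2 hl2⟩
    rw [Finset.sum_range_succ']
    simp only [zero_add]
    linarith

lemma exists_Ch {D : Set E} (hD : DC D) {h : ℝ} (hh : 0 < h) {z w : E} (hz : z ∈ D) (hw : w ∈ D)
    {ε : ℝ} (hε : 0 < ε) : ∃ R, R < kobayashi D z w + ε ∧ Ch D h w z R := by
  obtain ⟨r, ⟨m, c, h0, h1, h2, rfl⟩, hlt⟩ := exists_lt_of_csInf_lt (kob_ne hz hw)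
    (show kobayashi D z w < kobayashi D z w + ε / 2 by linarith)
  obtain ⟨R, hR, hc⟩ := Ch_of_chain hD hh m c h2 (ε / 2) (by linarith)
  rw [h0, h1] at hc
  exact ⟨R, by linarith, hc⟩

lemma Ch.kob {D : Set E} {h : ℝ} {w a : E} {R : ℝ} (H : Ch D h w a R) :
    kobayashi D a w ≤ R := by
  suffices ∃ (m : ℕ) (c : ℕ → E), c 0 = a ∧ c m = w ∧ (∀ i ≤ m, c i ∈ D) ∧
      (∑ i ∈ Finset.range m, lempert D (c i) (c (i + 1))) ≤ R by
    obtain ⟨m, c, h0, h1, h2, h3⟩ := this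
    exact (csInf_le (kob_bdd D a w) ⟨m, c, h0, h1, h2, rfl⟩).trans h3
  induction H with
  | nil h => exact ⟨0, fun _ => w, rfl, rfl, fun _ _ => h, by simp⟩
  | @cons a b l R hl _ _ ih =>
    obtain ⟨m, c, h0, h1, h2, h3⟩ := ih
    refine ⟨m + 1, fun i => Nat.casesOn i a c, rfl, h1, ?_, ?_⟩
    · intro i hi
      cases i with
      | zero => exact hl.left_mem
      | succ i => exact h2 i (by omega)
    · rw [Finset.sum_range_succ']
      have := hl.lempert_le
      have h5 : lempert D a (c 0) ≤ l := by rw [h0]; exact this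
      exact (add_le_add h3 h5).trans (by linarith)

lemma Ch.trans {D : Set E} {h : ℝ} {v w a : E} {R S : ℝ} (H : Ch D h v a R) (H' : Ch D h w v S) :
    Ch D h w a (R + S) := by
  induction H with
  | nil _ => simpa using H'
  | cons hl hlh _ ih =>
    rw [add_assoc]; exact Ch.cons hl hlh ih

lemma Ch.symm {D : Set E} {h : ℝ} {w a : E} {R : ℝ} (H : Ch D h w a R) : Ch D h a w R := by
  induction H with
  | nil h => exact Ch.nil h
  | @cons a b l R hl hlh _ ih =>
    have h2 := ih.trans (Ch.cons hl.symm hlh (Ch.nil hl.left_mem))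
    convert h2 using 1; ring

lemma kob_symm_le {D : Set E} (hD : DC D) {z w : E} (hz : z ∈ D) (hw : w ∈ D) :
    kobayashi D z w ≤ kobayashi D w z := by
  refine le_of_forall_pos_le_add fun ε hε => ?_
  obtain ⟨R, hR, hc⟩ := exists_Ch hD one_pos hw hz hε
  exact hc.symm.kob.trans hR.le

lemma kob_triangle {D : Set E} (hD : DC D) {x y z : E} (hx : x ∈ D) (hy : y ∈ D) (hz : z ∈ D) :
    kobayashi D x z ≤ kobayashi D x y + kobayashi D y z := by
  refine le_of_forall_pos_le_add fun ε hε => ?_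
  obtain ⟨R, hR, hc⟩ := exists_Ch hD one_pos hx hy (half_pos hε)
  obtain ⟨S, hS, hc'⟩ := exists_Ch hD one_pos hy hz (half_pos hε)
  have := (hc.trans hc').kob
  linarith

lemma Ch.mono {D D' : Set E} (hD : D ⊆ D') {h : ℝ} {w a : E} {R : ℝ} (H : Ch D h w a R) :
    Ch D' h w a R := by
  induction H with
  | nil h => exact Ch.nil (hD h)
  | cons hl hlh _ ih => exact Ch.cons (hl.mono hD) hlh ih

lemma kob_mono {D D' : Set E} (hD : DC D) (hDD : D ⊆ D') {z w : E} (hz : z ∈ D) (hw : w ∈ D) :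
    kobayashi D' z w ≤ kobayashi D z w := by
  refine le_of_forall_pos_le_add fun ε hε => ?_
  obtain ⟨R, hR, hc⟩ := exists_Ch hD one_pos hz hw hε
  exact (hc.mono hDD).kob.trans hR.le

lemma Lk_ball {D : Set E} {a b : E} (h : ∀ t : ℂ, ‖t‖ < 1 → a + t • ((2:ℂ) • (b - a)) ∈ D) :
    Lk D a b (artanh (1 / 2)) := by
  have := Lk_of_disc (D := D) (z := a) (w := b) (α := 1 / 2) (by norm_num)
    (φ := fun t => a + t • ((2:ℂ) • (b - a))) (by fun_prop)
    (fun t ht => h t (by simpa using ht)) (by simp) (by simp [smul_smul])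
  simpa using this

lemma compact_bound {D M : Set E} (hD : DC D) (ho : IsOpen D) (hM : IsCompact M) (hMD : M ⊆ D) :
    ∃ B : ℝ, ∀ x ∈ M, ∀ y ∈ M, kobayashi D x y ≤ B := by
  have hr : ∀ p ∈ M, ∃ r > 0, ball p (3 * r) ⊆ D := by
    intro p hp
    obtain ⟨r, hr, h⟩ := Metric.isOpen_iff.1 ho p (hMD hp)
    exact ⟨r / 3, by positivity, by convert h using 2; ring⟩
  choose! r hr0 hr using hr
  obtain ⟨t, htM, ht⟩ := hM.elim_nhds_subcover (fun p => ball p (r p))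
    (fun p hp => ball_mem_nhds _ (hr0 p hp))
  have hB : ∃ B : ℝ, ∀ pq ∈ t ×ˢ t, kobayashi D pq.1 pq.2 ≤ B := by
    obtain ⟨B, hB⟩ := ((t ×ˢ t).image fun pq => kobayashi D pq.1 pq.2).bddAbove
    exact ⟨B, fun pq hpq => hB (by
      rw [Finset.coe_image]; exact ⟨pq, hpq, rfl⟩)⟩
  obtain ⟨B, hB⟩ := hB
  have hs : ∀ p ∈ t, ∀ x ∈ ball p (r p), x ∈ M → kobayashi D x p ≤ artanh (1 / 2) := by
    intro p hp x hx hxM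
    refine (Lk_ball ?_).kob_le
    intro s hs
    apply hr p (htM p hp)
    rw [mem_ball] at *
    have : dist (x + s • ((2:ℂ) • (p - x))) x ≤ 2 * dist x p := by
      rw [dist_eq_norm, add_sub_cancel_left, norm_smul, norm_smul, dist_comm, dist_eq_norm]
      simp only [Complex.norm_ofNat]
      nlinarith [norm_nonneg (p - x)]
    have := dist_triangle (x + s • ((2:ℂ) • (p - x))) x p
    linarith
  refine ⟨artanh (1 / 2) + B + artanh (1 / 2), fun x hx y hy => ?_⟩
  obtain ⟨p, hp, hxp⟩ := mem_iUnion₂.1 (ht hx)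
  obtain ⟨q, hq, hyq⟩ := mem_iUnion₂.1 (ht hy)
  have h1 := hs p hp x hxp hx
  have h2 := (kob_symm_le hD (hMD (htM q hq)) (hMD hy)).trans (hs q hq y hyq hy)
  have h3 := hB (p, q) (by simp [hp, hq])
  have h4 := kob_triangle hD (hMD hx) (hMD (htM p hp)) (hMD hy)
  have h5 := kob_triangle hD (hMD (htM p hp)) (hMD (htM q hq)) (hMD hy)
  simp only at h3
  linarith

end Part1


section Part2
variable {E : Type*} [NormedAddCommGroup E] [NormedSpace ℂ E]

lemma tanh_lt_tanh' {u v : ℝ} (h : u < v) : Real.tanh u < Real.tanh v := by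
  have hf := tanh_sub_formula u v
  have h1 := abs_lt.1 (Real.abs_tanh_lt_one u)
  have h2 := abs_lt.1 (Real.abs_tanh_lt_one v)
  have h3 : 0 < Real.tanh (v - u) := by
    rw [Real.tanh_eq_sinh_div_cosh]
    exact div_pos (Real.sinh_pos_iff.2 (by linarith)) (Real.cosh_pos _)
  have h4 : 0 < 1 - Real.tanh u * Real.tanh v := by
    by_contra hc
    nlinarith
  nlinarith

lemma log_tanh_half (s : ℝ) : Real.log (1 + Real.tanh (s / 2)) - Real.log (1 - Real.tanh (s / 2)) = s := by
  have h := artanh_tanh' (s / 2)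
  have h2 := abs_lt.1 (Real.abs_tanh_lt_one (s / 2))
  unfold artanh at h
  rw [Real.log_div (by linarith) (by linarith)] at h
  linarith

lemma thin_disc {U : Set ℂ} (hU : IsOpen U) (h : (fun x : ℝ => (x : ℂ)) '' Icc 0 1 ⊆ U) :
    ∃ f : ℂ → ℂ, DifferentiableOn ℂ f (ball 0 1) ∧ MapsTo f (ball 0 1) U ∧
      ∃ u v : ℝ, u ≤ v ∧ f ((Real.tanh u : ℝ) : ℂ) = 0 ∧ f ((Real.tanh v : ℝ) : ℂ) = 1 := by
  obtain ⟨ε, hε, hεU⟩ := (isCompact_Icc.image Complex.continuous_ofReal).exists_cthickening_subset_open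
    hU h
  set c : ℝ := ε / (4 * Real.pi) with hc
  have hpi := Real.pi_pos
  have hc0 : 0 < c := by positivity
  set A : ℝ := (1 / 2 + ε / 2) / c with hA
  set r := Real.tanh (A / 2) with hr
  set t := Real.tanh (1 / (2 * c) / 2) with ht
  have htr : t < r := by
    apply tanh_lt_tanh'
    rw [hA, ← div_div]
    gcongr
    linarith
  have ht0 : 0 ≤ t := tanh_nonneg' (by positivity)
  have hr1 : r < 1 := Real.tanh_lt_one _
  have hr0 : 0 < r := by linarith
  have hlr := log_tanh_half A
  have hlt := log_tanh_half (1 / (2 * c))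
  rw [← hr] at hlr
  rw [← ht] at hlt
  have hb : ∀ ζ ∈ ball (0:ℂ) 1, ‖(r:ℂ) * ζ‖ < r := by
    intro ζ hζ
    rw [norm_mul, Complex.norm_real, Real.norm_of_nonneg hr0.le]
    simp at hζ
    nlinarith
  have hre : ∀ ζ ∈ ball (0:ℂ) 1, |((r:ℂ) * ζ).re| < r := fun ζ hζ =>
    (Complex.abs_re_le_norm _).trans_lt (hb ζ hζ)
  have hs1 : ∀ ζ ∈ ball (0:ℂ) 1, 1 + (r:ℂ) * ζ ∈ Complex.slitPlane := by
    intro ζ hζ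
    left
    have := abs_lt.1 (hre ζ hζ)
    rw [Complex.add_re, Complex.one_re]; linarith
  have hs2 : ∀ ζ ∈ ball (0:ℂ) 1, 1 - (r:ℂ) * ζ ∈ Complex.slitPlane := by
    intro ζ hζ
    left
    have := abs_lt.1 (hre ζ hζ)
    rw [Complex.sub_re, Complex.one_re]; linarith
  have hval : ∀ x : ℝ, |x| < 1 → (1 / 2 + c * (Complex.log (1 + r * (x:ℂ)) - Complex.log (1 - r * (x:ℂ))) : ℂ)
      = ((1 / 2 + c * (Real.log (1 + r * x) - Real.log (1 - r * x)) : ℝ) : ℂ) := by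
    intro x hx
    have := abs_lt.1 hx
    push_cast
    rw [Complex.ofReal_log (by nlinarith), Complex.ofReal_log (by nlinarith)]
    push_cast
    rfl
  have htr1 : |t / r| < 1 := by
    rw [abs_of_nonneg (by positivity), div_lt_one hr0]; exact htr
  have htr2 := abs_lt.1 htr1
  refine ⟨fun ζ => 1 / 2 + c * (Complex.log (1 + r * ζ) - Complex.log (1 - r * ζ)), ?_, ?_,
    artanh (-(t / r)), artanh (t / r), ?_, ?_, ?_⟩
  · refine DifferentiableOn.add (by fun_prop) (DifferentiableOn.mul (by fun_prop) (DifferentiableOn.sub ?_ ?_))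
    · exact DifferentiableOn.clog (by fun_prop) hs1
    · exact DifferentiableOn.clog (by fun_prop) hs2
  · intro ζ hζ
    apply hεU
    have hn := hb ζ hζ
    have n1 : ‖1 + (r:ℂ) * ζ‖ ≤ 1 + r := (norm_add_le _ _).trans (by simp only [norm_one]; linarith)
    have n2 : ‖1 - (r:ℂ) * ζ‖ ≤ 1 + r := (norm_sub_le _ _).trans (by simp only [norm_one]; linarith)
    have n3 : 1 - r ≤ ‖1 + (r:ℂ) * ζ‖ := by
      have := norm_sub_le (1 + (r:ℂ) * ζ) ((r:ℂ) * ζ)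
      rw [add_sub_cancel_right, norm_one] at this; linarith
    have n4 : 1 - r ≤ ‖1 - (r:ℂ) * ζ‖ := by
      have := norm_add_le (1 - (r:ℂ) * ζ) ((r:ℂ) * ζ)
      rw [sub_add_cancel, norm_one] at this; linarith
    have l1 := Real.log_le_log (by linarith) n1
    have l2 := Real.log_le_log (by linarith) n2
    have l3 := Real.log_le_log (by linarith) n3
    have l4 := Real.log_le_log (by linarith) n4
    have a1 := abs_le.1 (Complex.abs_arg_le_pi (1 + (r:ℂ) * ζ))
    have a2 := abs_le.1 (Complex.abs_arg_le_pi (1 - (r:ℂ) * ζ))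
    set W : ℂ := 1 / 2 + c * (Complex.log (1 + r * ζ) - Complex.log (1 - r * ζ)) with hW
    have hWre : W.re = 1 / 2 + c * (Real.log ‖1 + (r:ℂ) * ζ‖ - Real.log ‖1 - (r:ℂ) * ζ‖) := by
      rw [hW]
      simp [Complex.log_re]
    have hWim : W.im = c * (Complex.arg (1 + (r:ℂ) * ζ) - Complex.arg (1 - (r:ℂ) * ζ)) := by
      rw [hW]
      simp [Complex.log_im]
    have hcA : c * A = 1 / 2 + ε / 2 := by rw [hA]; field_simp
    have hcpi : c * (2 * Real.pi) = ε / 2 := by rw [hc]; field_simp; ring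
    have r1 : W.re ≤ 1 + ε / 2 := by
      rw [hWre]
      have := mul_le_mul_of_nonneg_left (show (Real.log ‖1 + (r:ℂ) * ζ‖ - Real.log ‖1 - (r:ℂ) * ζ‖) ≤ A by linarith) hc0.le
      linarith
    have r2 : -(ε / 2) ≤ W.re := by
      rw [hWre]
      have := mul_le_mul_of_nonneg_left (show -A ≤ (Real.log ‖1 + (r:ℂ) * ζ‖ - Real.log ‖1 - (r:ℂ) * ζ‖) by linarith) hc0.le
      linarith
    have i1 : |W.im| ≤ ε / 2 := by
      rw [hWim, abs_mul, abs_of_pos hc0, ← hcpi]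
      gcongr
      rw [abs_le]; constructor <;> linarith
    obtain ⟨s, hs, hs'⟩ : ∃ s ∈ Icc (0:ℝ) 1, |W.re - s| ≤ ε / 2 := by
      rcases le_total W.re 0 with h | h
      · exact ⟨0, by simp, by rw [abs_le]; constructor <;> linarith⟩
      rcases le_total W.re 1 with h' | h'
      · exact ⟨W.re, ⟨h, h'⟩, by simp; linarith⟩
      · exact ⟨1, by simp, by rw [abs_le]; constructor <;> linarith⟩
    refine mem_cthickening_of_dist_le W (s:ℂ) _ _ (mem_image_of_mem _ hs) ?_
    rw [dist_eq_norm]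
    refine (Complex.norm_le_abs_re_add_abs_im _).trans ?_
    simp only [Complex.sub_re, Complex.ofReal_re, Complex.sub_im, Complex.ofReal_im, sub_zero]
    linarith
  · have : artanh (-(t / r)) = - artanh (t / r) := by
      unfold artanh
      rw [Real.log_div (by linarith) (by linarith), Real.log_div (by linarith) (by linarith)]
      simp only [sub_neg_eq_add, ← sub_eq_add_neg]
      ring
    rw [this]
    have := artanh_nonneg' (x := t / r) (by positivity) htr2.2
    linarith
  · rw [tanh_artanh' (by linarith) (by linarith)]
    show (1 / 2 + c * (Complex.log (1 + r * ((-(t/r):ℝ):ℂ)) - Complex.log (1 - r * ((-(t/r):ℝ):ℂ))) : ℂ) = 0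
    rw [hval _ (by rwa [abs_neg]), Complex.ofReal_eq_zero]
    have : r * -(t / r) = - t := by field_simp
    rw [this]
    have : Real.log (1 + -t) - Real.log (1 - -t) = - (1 / (2 * c)) := by
      rw [← hlt]; simp only [sub_neg_eq_add, ← sub_eq_add_neg]; ring
    rw [this]; field_simp; ring
  · rw [tanh_artanh' (by linarith) (by linarith)]
    show (1 / 2 + c * (Complex.log (1 + r * ((t/r:ℝ):ℂ)) - Complex.log (1 - r * ((t/r:ℝ):ℂ))) : ℂ) = 1
    rw [hval _ htr1, Complex.ofReal_eq_one]
    have : r * (t / r) = t := by field_simp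
    rw [this, hlt]; field_simp; ring

open unitInterval in
lemma DC_of_domain {D : Set E} (ho : IsOpen D) (hc : IsConnected D) : DC D := by
  intro a ha b hb
  have hp : IsPathConnected D := (ho.isConnected_iff_isPathConnected).1 hc
  obtain ⟨γ, hγ⟩ := hp.joinedIn a ha b hb
  obtain ⟨δ, hδ, hδD⟩ := (isCompact_range γ.continuous).exists_thickening_subset_open ho
    (by rintro _ ⟨t, rfl⟩; exact hγ t)
  have hlim := bernsteinApproximation_uniform (E := E) γ.toContinuousMap
  have hev := (Metric.tendsto_nhds.1 hlim δ hδ).and (Filter.eventually_ne_atTop 0)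
  obtain ⟨n, hn, hn0⟩ := hev.exists
  set F := bernsteinApproximation n γ.toContinuousMap with hF
  let p : ℂ → E := fun ζ => ∑ k : Fin (n + 1),
    (((n.choose k : ℂ) * ζ ^ (k : ℕ) * (1 - ζ) ^ (n - (k:ℕ))) • γ.toContinuousMap (bernstein.z k))
  have hpF : ∀ x : I, p ((x : ℝ) : ℂ) = F x := by
    intro x
    rw [hF, bernsteinApproximation.apply]
    apply Finset.sum_congr rfl
    intro k _
    rw [bernstein_apply, ← Complex.coe_smul]
    push_cast
    rfl
  have hpd : Differentiable ℂ p := by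
    apply Differentiable.fun_sum
    intro k _
    fun_prop
  obtain ⟨f, hf1, hf2, u, v, huv, hu, hv⟩ := thin_disc (U := p ⁻¹' D) (ho.preimage hpd.continuous) (by
    rintro _ ⟨x, hx, rfl⟩
    show p _ ∈ D
    rw [hpF ⟨x, hx⟩]
    apply hδD
    rw [mem_thickening_iff]
    refine ⟨γ ⟨x, hx⟩, ⟨_, rfl⟩, ?_⟩
    exact (ContinuousMap.dist_apply_le_dist (f := F) (g := γ.toContinuousMap) ⟨x, hx⟩).trans_lt hn)
  have := Lk_two (D := D) (φ := fun ζ => p (f ζ)) (hpd.comp_differentiableOn hf1)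
    (fun ζ hζ => hf2 hζ) huv
  refine ⟨v - u, ?_⟩
  simp only [hu, hv] at this
  have e0 : p 0 = a := by
    have := hpF 0
    rw [hF, bernsteinApproximation.apply_zero] at this
    simpa using this
  have e1 : p 1 = b := by
    have := hpF 1
    rw [hF, bernsteinApproximation.apply_one hn0] at this
    simpa using this
  rwa [e0, e1] at this

end Part2


section Part3

lemma const_int {X : Type*} [TopologicalSpace X] {U : Set X} (hU : IsPreconnected U) {f : X → ℝ}
    (hf : ContinuousOn f U) (hi : ∀ x ∈ U, ∃ m : ℤ, f x = m) {x y : X} (hx : x ∈ U) (hy : y ∈ U) :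
    f x = f y := by
  have key : ∀ x ∈ U, ∀ y ∈ U, ¬ f x < f y := by
    intro x hx y hy hlt
    obtain ⟨m, hm⟩ := hi x hx
    obtain ⟨k, hk⟩ := hi y hy
    have hmk : m < k := by rw [hm, hk] at hlt; exact_mod_cast hlt
    have hmk' : (m:ℝ) + 1 ≤ k := by exact_mod_cast hmk
    have := (hU.image f hf).ordConnected.out ⟨x, hx, rfl⟩ ⟨y, hy, rfl⟩
      (show (m:ℝ) + 1 / 2 ∈ Icc (f x) (f y) by rw [hm, hk]; constructor <;> linarith)
    obtain ⟨z, hz, hz2⟩ := this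
    obtain ⟨j, hj⟩ := hi z hz
    rw [hj] at hz2
    have : (2 * j : ℝ) = 2 * m + 1 := by linarith
    have : 2 * j = 2 * m + 1 := by exact_mod_cast this
    omega
  exact le_antisymm (not_lt.1 (key y hy x hx)) (not_lt.1 (key x hx y hy))

lemma inter_preconnected {E : Type*} [NormedAddCommGroup E] [NormedSpace ℝ E] {U V : Set E}
    (hU : IsOpen U) (hV : IsOpen V) (hUc : IsPreconnected U) (hVc : IsPreconnected V)
    (hUV : U ∪ V = univ) : IsPreconnected (U ∩ V) := by
  rw [isPreconnected_iff_subset_of_disjoint]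
  intro A B hA hB hAB hdis
  by_contra hcon
  push Not at hcon
  obtain ⟨⟨y, hy, hyA⟩, ⟨x, hx, hxB⟩⟩ := And.imp not_subset.1 not_subset.1 hcon
  have hxA : x ∈ A := (hAB hx).resolve_right hxB
  obtain ⟨ρ, hρ0, hρ1, hρ⟩ := exists_continuous_zero_one_of_isClosed (s := Vᶜ) (t := Uᶜ)
    hV.isClosed_compl hU.isClosed_compl (by
      rw [Set.disjoint_left]
      intro z h1 h2
      have : z ∈ U ∪ V := by rw [hUV]; trivial
      exact this.elim h2 h1)
  classical
  set h : E → ℝ := fun z => if z ∈ A ∩ (U ∩ V) then 1 else 0 with hh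
  have h01 : ∀ z, h z = 0 ∨ h z = 1 := by
    intro z; simp only [hh]; split_ifs <;> simp
  have habs : ∀ z, |h z| ≤ 1 := by
    intro z; rcases h01 z with h | h <;> simp [h]
  have hloc : ∀ z ∈ U ∩ V, ContinuousAt h z := by
    intro z hz
    by_cases hzA : z ∈ A
    · have : h =ᶠ[nhds z] fun _ => 1 := by
        filter_upwards [(hA.inter (hU.inter hV)).mem_nhds ⟨hzA, hz⟩] with t ht
        simp only [hh, if_pos ht]
      exact continuousAt_const.congr this.symm
    · have hzB := (hAB hz).resolve_left hzA
      have : h =ᶠ[nhds z] fun _ => 0 := by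
        filter_upwards [(hB.inter (hU.inter hV)).mem_nhds ⟨hzB, hz⟩] with t ht
        have : t ∉ A ∩ (U ∩ V) := fun ht' => by
          have : t ∈ (U ∩ V) ∩ (A ∩ B) := ⟨ht.2, ht'.1, ht.1⟩
          rw [hdis] at this; exact this
        simp only [hh, if_neg this]
      exact continuousAt_const.congr this.symm
  have hsq : ∀ (g : E → ℝ) (z : E), ContinuousAt g z → g z = 0 → ContinuousAt (fun t => h t * g t) z := by
    intro g z hg hgz
    rw [ContinuousAt, hgz, mul_zero]
    refine squeeze_zero_norm (a := fun t => |g t|) (fun t => ?_) ?_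
    · rw [norm_mul, Real.norm_eq_abs, Real.norm_eq_abs]
      nlinarith [habs t, abs_nonneg (g t)]
    · have := hg.abs
      rw [ContinuousAt, hgz, abs_zero] at this
      exact this
  have hu : ContinuousOn (fun t => h t * ρ t) U := by
    intro z hz
    apply ContinuousAt.continuousWithinAt
    by_cases hzV : z ∈ V
    · exact (hloc z ⟨hz, hzV⟩).mul ρ.continuous.continuousAt
    · exact hsq _ z ρ.continuous.continuousAt (hρ0 hzV)
  have hv : ContinuousOn (fun t => h t * (ρ t - 1)) V := by
    intro z hz
    apply ContinuousAt.continuousWithinAt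
    by_cases hzU : z ∈ U
    · exact (hloc z ⟨hzU, hz⟩).mul (ρ.continuous.sub continuous_const).continuousAt
    · refine hsq (fun t => ρ t - 1) z (ρ.continuous.sub continuous_const).continuousAt ?_
      have := hρ1 hzU
      simp only [Pi.one_apply] at this
      rw [this]; ring
  let F : E → Circle := fun t => Circle.exp (2 * Real.pi * (h t * ρ t))
  have hF2 : ∀ t, F t = Circle.exp (2 * Real.pi * (h t * (ρ t - 1))) := by
    intro t
    show Circle.exp _ = _
    rw [Circle.exp_eq_exp]
    rcases h01 t with h | h
    · exact ⟨0, by simp [h]⟩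
    · exact ⟨1, by rw [h]; push_cast; ring⟩
  have hFU : ContinuousOn F U := Circle.exp.continuous.comp_continuousOn (continuousOn_const.mul hu)
  have hFV : ContinuousOn F V := by
    refine ContinuousOn.congr ?_ (fun t _ => hF2 t)
    exact Circle.exp.continuous.comp_continuousOn (continuousOn_const.mul hv)
  have hFc : Continuous F := by
    rw [← continuousOn_univ, ← hUV]
    exact hFU.union_of_isOpen hFV hU hV
  obtain ⟨e0, he0⟩ : ∃ e0, Circle.exp e0 = F 0 := ⟨_, rfl⟩
  obtain ⟨θ, ⟨-, hθ⟩, -⟩ := Circle.isCoveringMap_exp.existsUnique_continuousMap_lifts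
    (⟨F, hFc⟩ : C(E, Circle)) 0 e0 he0
  have hθ' : ∀ t, Circle.exp (θ t) = F t := fun t => congrFun hθ t
  have hpi := Real.pi_pos
  have c1 := const_int hUc (f := fun t => (θ t - 2 * Real.pi * (h t * ρ t)) / (2 * Real.pi))
    ((θ.continuous.continuousOn.sub (continuousOn_const.mul hu)).div_const _) (by
      intro t _
      obtain ⟨m, hm⟩ := Circle.exp_eq_exp.1 (hθ' t)
      exact ⟨m, by rw [hm]; field_simp; ring⟩) hx.1 hy.1
  have c2 := const_int hVc (f := fun t => (θ t - 2 * Real.pi * (h t * (ρ t - 1))) / (2 * Real.pi))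
    ((θ.continuous.continuousOn.sub (continuousOn_const.mul hv)).div_const _) (by
      intro t _
      obtain ⟨m, hm⟩ := Circle.exp_eq_exp.1 ((hθ' t).trans (hF2 t))
      exact ⟨m, by rw [hm]; field_simp; ring⟩) hx.2 hy.2
  have hhx : h x = 1 := by simp only [hh]; rw [if_pos ⟨hxA, hx⟩]
  have hhy : h y = 0 := by simp only [hh]; rw [if_neg (fun hc => hyA hc.1)]
  simp only [hhx, hhy] at c1 c2
  field_simp at c1 c2
  nlinarith

lemma compl_ball_preconnected {E : Type*} [NormedAddCommGroup E] [NormedSpace ℝ E]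
    (hr : 1 < Module.rank ℝ E) {R : ℝ} (hR : 0 < R) : IsPreconnected {x : E | R ≤ ‖x‖} := by
  have h1 := (isPathConnected_sphere hr (0:E) zero_le_one).isConnected.isPreconnected
  have h2 := h1.prod (isPreconnected_Ici (a := R))
  have h3 := h2.image (fun p : E × ℝ => p.2 • p.1) (by fun_prop)
  convert h3 using 1
  ext x
  constructor
  · intro hx
    have hx' : R ≤ ‖x‖ := hx
    have : 0 < ‖x‖ := by linarith
    refine ⟨(‖x‖⁻¹ • x, ‖x‖), ⟨?_, hx⟩, ?_⟩
    · simp [norm_smul, this.ne']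
    · simp [smul_smul, this.ne']
  · rintro ⟨⟨y, t⟩, ⟨hy, ht⟩, rfl⟩
    simp at hy ht
    simp only [mem_setOf_eq, norm_smul, hy, Real.norm_eq_abs, mul_one]
    exact ht.trans (le_abs_self t)

lemma compl_preconnected {E : Type*} [NormedAddCommGroup E] [NormedSpace ℂ E]
    (hr : 1 < Module.rank ℝ E) {K : Set E} (hK : Bornology.IsBounded K)
    (hlines : ∀ z : E, z ∉ K → ∃ b : E, b ≠ 0 ∧ ∀ t : ℂ, z + t • b ∉ K) :
    IsPreconnected Kᶜ := by
  obtain ⟨R, hR0, hR⟩ := hK.exists_pos_norm_lt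
  have hfar : ∀ z b : E, b ≠ 0 → ∃ t : ℂ, R ≤ ‖z + t • b‖ := by
    intro z b hb
    have hb' : 0 < ‖b‖ := norm_pos_iff.2 hb
    refine ⟨(((R + ‖z‖) / ‖b‖ : ℝ) : ℂ), ?_⟩
    have h1 : ‖(((R + ‖z‖) / ‖b‖ : ℝ) : ℂ) • b‖ = R + ‖z‖ := by
      rw [norm_smul, Complex.norm_real, Real.norm_of_nonneg (by positivity)]
      field_simp
    have h2 := norm_sub_le (z + (((R + ‖z‖) / ‖b‖ : ℝ) : ℂ) • b) z
    rw [add_sub_cancel_left, h1] at h2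
    linarith
  have hS := compl_ball_preconnected hr hR0
  have hSK : {x : E | R ≤ ‖x‖} ⊆ Kᶜ := fun x hx hxK => absurd (hR x hxK) (not_lt.2 hx)
  rcases (Kᶜ).eq_empty_or_nonempty with h0 | ⟨z0, hz0⟩
  · rw [h0]; exact isPreconnected_empty
  obtain ⟨b0, hb0, -⟩ := hlines z0 hz0
  obtain ⟨t0, ht0⟩ := hfar z0 b0 hb0
  refine isPreconnected_of_forall (z0 + t0 • b0) fun y hy => ?_
  obtain ⟨b, hb, hbK⟩ := hlines y hy
  obtain ⟨t, ht⟩ := hfar y b hb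
  have hl : IsPreconnected (range fun s : ℂ => y + s • b) := isPreconnected_range (by fun_prop)
  refine ⟨{x : E | R ≤ ‖x‖} ∪ range fun s : ℂ => y + s • b, ?_, Or.inl ht0,
    Or.inr ⟨0, by simp⟩, IsPreconnected.union (y + t • b) ht ⟨t, rfl⟩ hS hl⟩
  apply union_subset hSK
  rintro _ ⟨s, rfl⟩
  exact hbK s

end Part3


section Part4
variable {E : Type*} [NormedAddCommGroup E] [NormedSpace ℂ E]

lemma arctan_step {g x l : ℝ} (hl0 : 0 ≤ l) (hl1 : l ≤ 1) (hx : |x| ≤ g + 1) :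
    l * Real.exp (-2 * g) ≤ 3 * Real.exp 2 * (Real.arctan (x + l) - Real.arctan x) := by
  have h1 : Real.exp (-2 * g) ≤ Real.exp 2 * (1 / (1 + x ^ 2)) := by
    have h2 : Real.exp (-2 * g) ≤ Real.exp 2 * Real.exp (-(2 * |x|)) := by
      rw [← Real.exp_add]
      apply Real.exp_le_exp.2; linarith
    refine h2.trans ?_
    gcongr
    rw [Real.exp_neg, ← one_div]
    apply one_div_le_one_div_of_le (by positivity)
    have h3 := Real.add_one_le_exp |x|
    have h4 : Real.exp (2 * |x|) = Real.exp |x| * Real.exp |x| := by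
      rw [← Real.exp_add]; ring_nf
    rw [h4, ← sq_abs]
    nlinarith [abs_nonneg x]
  have h5 : l / (3 * (1 + x ^ 2)) ≤ Real.arctan (x + l) - Real.arctan x := by
    rcases hl0.eq_or_lt with rfl | hl
    · simp
    obtain ⟨c, hc, hc2⟩ := exists_hasDerivAt_eq_slope Real.arctan (fun y => 1 / (1 + y ^ 2))
      (show x < x + l by linarith) Real.continuous_arctan.continuousOn
      (fun y _ => Real.hasDerivAt_arctan y)
    rw [add_sub_cancel_left, eq_div_iff hl.ne'] at hc2
    rw [← hc2, div_eq_mul_one_div, mul_comm]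
    gcongr
    have hcx : |c| ≤ |x| + 1 := by
      have := abs_add_le x (c - x)
      have h6 : |c - x| ≤ 1 := by rw [abs_le]; constructor <;> linarith [hc.1, hc.2]
      rw [add_sub_cancel] at this; linarith
    have : c ^ 2 ≤ (|x| + 1) ^ 2 := by rw [← sq_abs]; gcongr
    rw [← sq_abs x]
    nlinarith [sq_nonneg (|x| - 1), sq_nonneg (|x|)]
  calc l * Real.exp (-2 * g) ≤ l * (Real.exp 2 * (1 / (1 + x ^ 2))) := by gcongr
    _ = 3 * Real.exp 2 * (l / (3 * (1 + x ^ 2))) := by field_simp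
    _ ≤ _ := by gcongr

lemma near_bound [ProperSpace E] {G K : Set E} (hDC : DC (G \ K)) (hG : IsOpen G)
    (hK : IsCompact K) {δ : ℝ} (hδ : 0 < δ) (hKG : cthickening (4 * δ) K ⊆ G)
    (hlines : ∀ z : E, z ∉ K → ∃ b : E, b ≠ 0 ∧ ∀ t : ℂ, z + t • b ∉ K) :
    ∃ B : ℝ, ∀ x ∈ cthickening (2 * δ) K \ K, ∀ y ∈ cthickening (2 * δ) K \ K,
      kobayashi (G \ K) x y ≤ B := by
  have hM : IsCompact (cthickening (3 * δ) K \ thickening δ K) :=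
    hK.cthickening.diff isOpen_thickening
  have hMD : cthickening (3 * δ) K \ thickening δ K ⊆ G \ K := fun x hx =>
    ⟨hKG (cthickening_mono (by linarith) _ hx.1), fun h => hx.2 (self_subset_thickening hδ _ h)⟩
  have hLD : cthickening (2 * δ) K \ K ⊆ G \ K := fun x hx =>
    ⟨hKG (cthickening_mono (by linarith) _ hx.1), hx.2⟩
  obtain ⟨B, hB⟩ := compact_bound hDC (hG.sdiff hK.isClosed) hM hMD
  obtain ⟨ρ, hρ0, hρ⟩ := (hK.cthickening (r := 2 * δ)).isBounded.exists_pos_norm_le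
  obtain ⟨N, hN⟩ := exists_nat_gt (2 * ρ / δ)
  rw [div_lt_iff₀ hδ] at hN
  have ha := artanh_nonneg' (x := 1 / 2) (by norm_num) (by norm_num)
  have key : ∀ y ∈ cthickening (2 * δ) K \ K, ∃ m ∈ cthickening (3 * δ) K \ thickening δ K,
      kobayashi (G \ K) y m ≤ N * artanh (1 / 2) := by
    intro y hy
    obtain ⟨b', hb'0, hb'⟩ := hlines y hy.2
    obtain ⟨b, hb1, hb⟩ : ∃ b : E, ‖b‖ = 1 ∧ ∀ t : ℂ, y + t • b ∉ K := by
      refine ⟨((‖b'‖⁻¹ : ℝ) : ℂ) • b', ?_, fun t => ?_⟩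
      · rw [norm_smul, Complex.norm_real]
        simp [hb'0]
      · rw [smul_smul]; exact hb' _
    have step : ∀ n : ℕ, (∃ m ∈ cthickening (3 * δ) K \ thickening δ K,
        kobayashi (G \ K) y m ≤ n * artanh (1 / 2)) ∨
        (y + ((n * δ : ℝ) : ℂ) • b ∈ cthickening (2 * δ) K ∧
          kobayashi (G \ K) y (y + ((n * δ : ℝ) : ℂ) • b) ≤ n * artanh (1 / 2)) := by
      intro n
      induction n with
      | zero =>
        right
        simpa using And.intro hy.1 (kob_self (hLD hy)).le
      | succ n ih =>
        rcases ih with ⟨m, hm, hm2⟩ | ⟨h1, h2⟩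
        · left
          exact ⟨m, hm, hm2.trans (by push_cast; nlinarith)⟩
        · set p := y + ((n * δ : ℝ) : ℂ) • b with hp
          have hpK : p ∉ K := hb _
          have hq : y + (((n + 1 : ℕ) * δ : ℝ) : ℂ) • b = p + (δ : ℂ) • b := by
            rw [hp]; push_cast; module
          rw [hq]
          rw [hK.cthickening_eq_biUnion_closedBall (by linarith)] at h1
          obtain ⟨k, hk, hpk⟩ := mem_iUnion₂.1 h1
          rw [mem_closedBall] at hpk
          have hlk : Lk (G \ K) p (p + (δ : ℂ) • b) (artanh (1 / 2)) := by
            apply Lk_ball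
            intro t ht
            constructor
            · apply hKG
              apply mem_cthickening_of_dist_le _ k _ _ hk
              refine (dist_triangle _ p _).trans ?_
              have : dist (p + t • (2:ℂ) • (p + (δ:ℂ) • b - p)) p ≤ 2 * δ := by
                rw [dist_eq_norm, add_sub_cancel_left, add_sub_cancel_left, norm_smul, norm_smul,
                  norm_smul, hb1, Complex.norm_real, Real.norm_of_nonneg hδ.le]
                simp only [Complex.norm_ofNat]
                nlinarith
              linarith
            · rw [add_sub_cancel_left, hp, smul_smul, smul_smul, add_assoc, ← add_smul]
              exact hb _
          have hpD := hlk.left_mem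
          have hqD := hlk.right_mem
          have h3 := kob_triangle hDC (hLD hy) hpD hqD
          have h4 := hlk.kob_le
          have h5 : kobayashi (G \ K) y (p + (δ : ℂ) • b) ≤ ((n + 1 : ℕ):ℝ) * artanh (1 / 2) := by
            push_cast; linarith
          by_cases hq2 : p + (δ : ℂ) • b ∈ cthickening (2 * δ) K
          · right; exact ⟨hq2, h5⟩
          · left
            refine ⟨_, ⟨?_, ?_⟩, h5⟩
            · apply mem_cthickening_of_dist_le _ k _ _ hk
              refine (dist_triangle _ p _).trans ?_
              have : dist (p + (δ:ℂ) • b) p = δ := by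
                rw [dist_eq_norm, add_sub_cancel_left, norm_smul, hb1, Complex.norm_real,
                  Real.norm_of_nonneg hδ.le, mul_one]
              linarith
            · intro h
              exact hq2 (cthickening_mono (by linarith) _ (thickening_subset_cthickening _ _ h))
    rcases step N with h | ⟨h, -⟩
    · exact h
    · exfalso
      have h1 := hρ _ h
      have h2 := hρ _ hy.1
      have h3 := norm_sub_le (y + ((N * δ : ℝ) : ℂ) • b) y
      rw [add_sub_cancel_left, norm_smul, hb1, Complex.norm_real,
        Real.norm_of_nonneg (by positivity)] at h3
      linarith
  refine ⟨N * artanh (1 / 2) + B + N * artanh (1 / 2), fun x hx y hy => ?_⟩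
  obtain ⟨p, hp, h1⟩ := key x hx
  obtain ⟨q, hq, h2⟩ := key y hy
  have h3 := hB p hp q hq
  have h4 := kob_triangle hDC (hLD hx) (hMD hp) (hLD hy)
  have h5 := kob_triangle hDC (hMD hp) (hMD hq) (hLD hy)
  have h6 := kob_symm_le hDC (hMD hq) (hLD hy)
  linarith

lemma schwarz_dist {G : Set E} {ρ : ℝ} (hρ : ∀ x ∈ G, ‖x‖ ≤ ρ) {φ : ℂ → E}
    (h1 : DifferentiableOn ℂ φ (ball 0 1)) (h2 : MapsTo φ (ball 0 1) G) {ζ : ℂ}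
    (hζ : ζ ∈ ball (0:ℂ) 1) : dist (φ ζ) (φ 0) ≤ 2 * ρ * ‖ζ‖ := by
  have := Complex.dist_le_div_mul_dist_of_mapsTo_ball (R₂ := 2 * ρ) h1 (by
    intro x hx
    rw [mem_closedBall, dist_eq_norm]
    have a1 := hρ _ (h2 hx)
    have a2 := hρ _ (h2 (show (0:ℂ) ∈ ball (0:ℂ) 1 by simp))
    exact (norm_sub_le _ _).trans (by linarith)) hζ
  simpa using this

lemma Lk.dist_le {G : Set E} {ρ : ℝ} (hρ : ∀ x ∈ G, ‖x‖ ≤ ρ) {a b : E} {l : ℝ} (h : Lk G a b l) :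
    dist b a ≤ 2 * ρ * (2 * l) := by
  have h00 := (norm_nonneg a).trans (hρ a h.left_mem)
  obtain ⟨h0, φ, h1, h2, h3, h4⟩ := h
  have := schwarz_dist hρ h1 h2 (tanh_mem_ball l)
  rw [h3, h4, norm_ofReal_tanh h0] at this
  exact this.trans (by gcongr; exact tanh_le_two_mul h0)

lemma link_cost {G K : Set E} {ρ s δ B0 : ℝ} (hρ : ∀ x ∈ G, ‖x‖ ≤ ρ) (hs0 : 0 < s)
    (hs1 : s ≤ 1 / 2) (hsδ : 2 * ρ * s ≤ δ) (hDC : DC G) (hKG : K ⊆ G) {o : E} (ho : o ∈ G)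
    (hB0 : ∀ x ∈ K, kobayashi G x o ≤ B0)
    {a b : E} {l : ℝ} (ha : a ∉ cthickening δ K) (hl : Lk G a b l) (hls : l ≤ s / 4) :
    b ∉ K ∧ kobayashi (G \ K) a b ≤
      l + 8 * Real.exp (2 * B0) / s * (l * Real.exp (-2 * kobayashi G a o)) := by
  have haG := hl.left_mem
  have h00 := (norm_nonneg a).trans (hρ a hl.left_mem)
  obtain ⟨h0, φ, h1, h2, h3, h4⟩ := hl
  set g := kobayashi G a o with hg
  set P := 2 * Real.exp (2 * B0) * Real.exp (-2 * g) with hP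
  have hP0 : 0 < P := by positivity
  set q := max s (1 - P) with hq
  have hqs : s ≤ q := le_max_left _ _
  have hqP : 1 - P ≤ q := le_max_right _ _
  have hq1 : q ≤ 1 := max_le (by linarith) (by linarith)
  have hq0 : 0 < q := by linarith
  have hKq : ∀ ζ ∈ ball (0:ℂ) 1, φ ζ ∈ K → q ≤ ‖ζ‖ := by
    intro ζ hζ hK
    have hζ1 : ‖ζ‖ < 1 := by simpa using hζ
    apply max_le
    · by_contra hlt
      push Not at hlt
      apply ha
      apply mem_cthickening_of_dist_le a (φ ζ) _ _ hK
      have := schwarz_dist hρ h1 h2 hζ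
      rw [dist_comm, h3] at this
      refine this.trans (le_trans ?_ hsδ)
      gcongr
    · have k1 := (Lk_of_disc hζ1 h1 h2 h3 rfl).kob_le
      have k2 := kob_triangle hDC haG (hKG hK) ho
      have k3 := hB0 _ hK
      have := one_sub_le_of_artanh (t := ‖ζ‖) (r := g - B0) (norm_nonneg _) hζ1 (by linarith)
      have e : 2 * Real.exp (-2 * (g - B0)) = P := by
        rw [hP, mul_assoc, ← Real.exp_add]; ring_nf
      linarith
  set x := Real.tanh l with hx
  have hx0 : 0 ≤ x := tanh_nonneg' h0
  have hx2 : x ≤ 2 * l := tanh_le_two_mul h0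
  have hxq : x / q ≤ 1 / 2 := by
    rw [div_le_iff₀ hq0]; linarith
  constructor
  · intro hb
    rw [← h4] at hb
    have := hKq _ (tanh_mem_ball l) hb
    rw [norm_ofReal_tanh h0] at this
    rw [div_le_iff₀ hq0] at hxq
    linarith
  · have hm : ∀ ζ ∈ ball (0:ℂ) 1, ‖(q:ℂ) * ζ‖ < q := by
      intro ζ hζ
      rw [norm_mul, Complex.norm_real, Real.norm_of_nonneg hq0.le]
      simp at hζ
      nlinarith
    have hm' : MapsTo (fun ζ : ℂ => (q:ℂ) * ζ) (ball 0 1) (ball 0 1) := by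
      intro ζ hζ
      have := hm ζ hζ
      rw [mem_ball_zero_iff]; linarith
    have hxn : ‖((x / q : ℝ) : ℂ)‖ = x / q := by
      rw [Complex.norm_real, Real.norm_of_nonneg (by positivity)]
    have hlk := Lk_of_disc (D := G \ K) (z := a) (w := b) (α := ((x / q : ℝ) : ℂ))
      (φ := fun ζ => φ (q * ζ)) (by rw [hxn]; linarith)
      (h1.comp (by fun_prop) hm')
      (fun ζ hζ => ⟨h2 (hm' hζ), fun hK => absurd (hKq _ (hm' hζ) hK) (not_le.2 (hm ζ hζ))⟩)
      (by simpa using h3) (by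
        rw [← h4]; show φ _ = φ _
        congr 1
        rw [← Complex.ofReal_mul]
        congr 1
        field_simp)
    refine hlk.kob_le.trans ?_
    rw [hxn]
    have hle : x ≤ x / q := by
      rw [le_div_iff₀ hq0]; nlinarith
    refine (artanh_diff_le hx0 hle hxq).trans ?_
    rw [hx, artanh_tanh', ← hx]
    have e1 : x / q - x = x * ((1 - q) / q) := by field_simp
    have e2 : (1 - q) / q ≤ P / s := by
      apply div_le_div₀ hP0.le (by linarith) hs0 hqs
    have e3 : x * ((1 - q) / q) ≤ 2 * l * (P / s) :=
      mul_le_mul hx2 e2 (div_nonneg (by linarith) hq0.le) (by positivity)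
    have e4 : 8 * Real.exp (2 * B0) / s * (l * Real.exp (-2 * g)) = 2 * (2 * l * (P / s)) := by
      rw [hP]; field_simp; ring
    rw [e4, e1]
    linarith

lemma main_bound [ProperSpace E] {G K : Set E} (hDCG : DC G) (hDC : DC (G \ K)) (hG : IsOpen G)
    (hGne : G.Nonempty)
    (hGb : Bornology.IsBounded G) (hK : IsCompact K) (hKG : K ⊆ G)
    (hlines : ∀ z : E, z ∉ K → ∃ b : E, b ≠ 0 ∧ ∀ t : ℂ, z + t • b ∉ K) :
    ∃ C : ℝ, 0 ≤ C ∧ ∀ z ∈ G \ K, ∀ w ∈ G \ K,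
      kobayashi (G \ K) z w ≤ kobayashi G z w + C := by
  obtain ⟨δ', hδ', hδK⟩ := hK.exists_cthickening_subset_open hG hKG
  obtain ⟨δ, hδ, rfl⟩ : ∃ δ : ℝ, 0 < δ ∧ δ' = 4 * δ := ⟨δ' / 4, by positivity, by ring⟩
  obtain ⟨B1, hB1⟩ := near_bound hDC hG hK hδ hδK hlines
  set B := max B1 0
  have hB : ∀ x ∈ cthickening (2 * δ) K \ K, ∀ y ∈ cthickening (2 * δ) K \ K,
      kobayashi (G \ K) x y ≤ B := fun x hx y hy => (hB1 x hx y hy).trans (le_max_left _ _)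
  have hB00 : 0 ≤ B := le_max_right _ _
  obtain ⟨ρ, hρ0, hρ⟩ := hGb.exists_pos_norm_le
  obtain ⟨o, ho⟩ := hGne
  obtain ⟨B0, hB0'⟩ := compact_bound hDCG hG (hK.insert o) (insert_subset ho hKG)
  have hB0 : ∀ x ∈ K, kobayashi G x o ≤ B0 := fun x hx => hB0' x (Or.inr hx) o (Or.inl rfl)
  obtain ⟨s, hs0, hs1, hsδ⟩ : ∃ s : ℝ, 0 < s ∧ s ≤ 1 / 2 ∧ 2 * ρ * s ≤ δ := by
    refine ⟨min (1 / 2) (δ / (2 * ρ)), by positivity, min_le_left _ _, ?_⟩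
    calc 2 * ρ * min (1 / 2) (δ / (2 * ρ)) ≤ 2 * ρ * (δ / (2 * ρ)) := by
          gcongr; exact min_le_right _ _
      _ = δ := by field_simp
  set C0 := 8 * Real.exp (2 * B0) / s with hC0
  have hC0p : 0 < C0 := by positivity
  set C1 := C0 * (3 * Real.exp 2) with hC1
  have hC1p : 0 < C1 := by positivity
  have hpi := Real.pi_pos
  refine ⟨1 + C1 * Real.pi + B, by positivity, fun z hz w hw => ?_⟩
  obtain ⟨S, hS, hch⟩ := exists_Ch hDCG (h := s / 4) (by positivity) hz.1 hw.1 one_pos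
  set T := kobayashi G z o with hT
  set Φ : ℝ → ℝ := fun x => Real.arctan (x - T) with hΦ
  have hΦm : ∀ x y, x ≤ y → Φ x ≤ Φ y := fun x y hxy =>
    Real.arctan_mono (by linarith)
  have hKL : K ⊆ cthickening δ K := self_subset_cthickening _
  have hL12 : cthickening δ K ⊆ cthickening (2 * δ) K := cthickening_mono (by linarith) _
  have main : ∀ {a : E} {R : ℝ}, Ch G (s / 4) w a R → kobayashi G z a ≤ S - R →
      (a ∉ cthickening δ K ∧ kobayashi (G \ K) a w ≤ R + C1 * (Φ S - Φ (S - R))) ∨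
      ((∀ y ∈ cthickening (2 * δ) K \ K,
          kobayashi (G \ K) y w ≤ R + C1 * (Φ S - Φ (S - R)) + B) ∧
        (a ∉ cthickening δ K → kobayashi (G \ K) a w ≤ R + C1 * (Φ S - Φ (S - R)) + B)) := by
    intro a R H
    induction H with
    | nil _ =>
      intro _
      simp only [sub_zero, sub_self, mul_zero, add_zero, zero_add]
      by_cases hwL : w ∈ cthickening δ K
      · right
        exact ⟨fun y hy => hB y hy w ⟨hL12 hwL, hw.2⟩, fun h => absurd hwL h⟩
      · left
        exact ⟨hwL, (kob_self hw).le⟩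
    | @cons a b l R hl hlh hR ih =>
      intro hza
      have hl0 : 0 ≤ l := hl.1
      have haG := hl.left_mem
      have hbG := hl.right_mem
      have hzb : kobayashi G z b ≤ S - R := by
        have := kob_triangle hDCG hz.1 haG hbG
        have := hl.kob_le
        linarith
      have hIH := ih hzb
      have hcost : a ∉ cthickening δ K → b ∉ K ∧ kobayashi (G \ K) a b ≤
          l + C1 * (Φ (S - R) - Φ (S - (l + R))) := by
        intro haL
        obtain ⟨hb, hk⟩ := link_cost hρ hs0 hs1 hsδ hDCG hKG ho hB0 haL hl hlh
        refine ⟨hb, hk.trans ?_⟩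
        have t1 := kob_triangle hDCG hz.1 haG ho
        have t2 := kob_triangle hDCG hz.1 haG hw.1
        have t3 := (Ch.cons hl hlh hR).kob
        have t4 := kob_triangle hDCG hz.1 ho haG
        have t5 := kob_symm_le hDCG ho haG
        have hst := arctan_step (g := kobayashi G a o) (x := S - (l + R) - T) hl0
          (by linarith) (by rw [abs_le]; constructor <;> linarith)
        have e : S - (l + R) - T + l = S - R - T := by ring
        rw [e] at hst
        have := mul_le_mul_of_nonneg_left hst hC0p.le
        rw [← mul_assoc C0] at this
        simp only [hΦ]
        linarith
      have hV : R + C1 * (Φ S - Φ (S - R)) ≤ (l + R) + C1 * (Φ S - Φ (S - (l + R))) := by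
        have := mul_le_mul_of_nonneg_left (hΦm (S - (l + R)) (S - R) (by linarith)) hC1p.le
        linarith
      by_cases haL : a ∈ cthickening δ K
      · right
        refine ⟨fun y hy => ?_, fun h => absurd haL h⟩
        rcases hIH with ⟨hbL, hbw⟩ | ⟨h1, -⟩
        · have hbL2 : b ∈ cthickening (2 * δ) K := by
            rw [hK.cthickening_eq_biUnion_closedBall hδ.le] at haL
            obtain ⟨k, hk, hak⟩ := mem_iUnion₂.1 haL
            rw [mem_closedBall] at hak
            apply mem_cthickening_of_dist_le b k _ _ hk
            have d1 := dist_triangle b a k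
            have d2 := hl.dist_le hρ
            have d3 : 2 * ρ * (2 * l) ≤ 2 * ρ * s := by gcongr; linarith
            linarith
          have hbK : b ∉ K := fun h => hbL (hKL h)
          have := hB y hy b ⟨hbL2, hbK⟩
          have := kob_triangle hDC (show y ∈ G \ K from
            ⟨hδK (cthickening_mono (by linarith) _ hy.1), hy.2⟩) (show b ∈ G \ K from ⟨hbG, hbK⟩) hw
          linarith
        · have := h1 y hy
          linarith
      · obtain ⟨hbK, hk⟩ := hcost haL
        have haK : a ∉ K := fun h => haL (hKL h)
        have htr := kob_triangle hDC (show a ∈ G \ K from ⟨haG, haK⟩)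
          (show b ∈ G \ K from ⟨hbG, hbK⟩) hw
        rcases hIH with ⟨hbL, hbw⟩ | ⟨h1, h2⟩
        · left
          refine ⟨haL, ?_⟩
          linarith
        · right
          refine ⟨fun y hy => (h1 y hy).trans (by linarith), fun _ => ?_⟩
          by_cases hbL : b ∈ cthickening δ K
          · have := h1 b ⟨hL12 hbL, hbK⟩
            linarith
          · have := h2 hbL
            linarith
  have hΦb : C1 * (Φ S - Φ (S - S)) ≤ C1 * Real.pi := by
    gcongr
    have b1 := Real.arctan_lt_pi_div_two (S - T)
    have b2 := Real.neg_pi_div_two_lt_arctan (S - S - T)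
    simp only [hΦ]; linarith
  rcases main hch (by rw [sub_self, kob_self hz.1]) with ⟨-, h⟩ | ⟨h1, h2⟩
  · linarith
  · by_cases hzL : z ∈ cthickening δ K
    · have := h1 z ⟨hL12 hzL, hz.2⟩
      linarith
    · have := h2 hzL
      linarith

end Part4

/-- **Proposition 7.** Let `G` be a bounded domain in `ℂⁿ` (`n ≥ 2`) and `K ⊆ G` a
compact set such that through every point of `ℂⁿ ∖ K` passes a complex affine line
disjoint from `K`. Then `G ∖ K` is a domain, `k_{G∖K}` is quasi-isometrically
equivalent to the restriction of `k_G`, and if `(G, k_G)` is Gromov hyperbolic then so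
is `(G∖K, k_{G∖K})`. -/
theorem kobayashi_quasi_isometric_on_complement_of_compact
    (n : ℕ) (hn : 2 ≤ n) (G : Set (EuclideanSpace ℂ (Fin n)))
    (hGopen : IsOpen G) (hGconn : IsConnected G) (hGbdd : Bornology.IsBounded G)
    (K : Set (EuclideanSpace ℂ (Fin n))) (hK : IsCompact K) (hKG : K ⊆ G)
    (hlines : ∀ z : EuclideanSpace ℂ (Fin n), z ∉ K →
      ∃ b : EuclideanSpace ℂ (Fin n), b ≠ 0 ∧ ∀ t : ℂ, z + t • b ∉ K) :
    IsConnected (G \ K) ∧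
    (∃ c₁ : ℝ, 1 ≤ c₁ ∧ ∃ c₂ : ℝ, 0 ≤ c₂ ∧
      ∀ z ∈ G \ K, ∀ w ∈ G \ K,
        kobayashi G z w ≤ kobayashi (G \ K) z w ∧
        kobayashi (G \ K) z w ≤ c₁ * kobayashi G z w + c₂) ∧
    (GromovHyperbolicWith G (kobayashi G) →
      GromovHyperbolicWith (G \ K) (kobayashi (G \ K))) := by
  have : Nonempty (Fin n) := ⟨⟨0, by omega⟩⟩
  have hr : 1 < Module.rank ℝ (EuclideanSpace ℂ (Fin n)) := by
    have h1 : Module.finrank ℝ (EuclideanSpace ℂ (Fin n)) = 2 * n := by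
      rw [finrank_real_of_complex, finrank_euclideanSpace_fin]
    rw [← Module.finrank_eq_rank, h1]
    exact_mod_cast (by omega : 1 < 2 * n)
  have hne : (G \ K).Nonempty := by
    by_contra hcon
    rw [not_nonempty_iff_eq_empty, diff_eq_empty] at hcon
    have hGK : G = K := hcon.antisymm hKG
    have hcl : IsClopen G := ⟨hGK ▸ hK.isClosed, hGopen⟩
    have hu : G = univ := hcl.eq_univ hGconn.nonempty
    exact noncompact_univ (EuclideanSpace ℂ (Fin n)) (by rw [← hu, hGK]; exact hK)
  have hc : IsConnected (G \ K) := by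
    refine ⟨hne, ?_⟩
    rw [diff_eq]
    refine inter_preconnected hGopen hK.isClosed.isOpen_compl hGconn.isPreconnected
      (compl_preconnected hr hK.isBounded hlines) ?_
    rw [eq_univ_iff_forall]
    intro x
    by_cases hx : x ∈ K
    · exact Or.inl (hKG hx)
    · exact Or.inr hx
  have hDG : DC G := DC_of_domain hGopen hGconn
  have hDK : DC (G \ K) := DC_of_domain (hGopen.sdiff hK.isClosed) hc
  obtain ⟨C, hC0, hC⟩ := main_bound hDG hDK hGopen hGconn.nonempty hGbdd hK hKG hlines
  have hlow : ∀ z ∈ G \ K, ∀ w ∈ G \ K, kobayashi G z w ≤ kobayashi (G \ K) z w :=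
    fun z hz w hw => kob_mono hDK diff_subset hz hw
  refine ⟨hc, ⟨1, le_rfl, C, hC0, fun z hz w hw => ⟨hlow z hz w hw, ?_⟩⟩, ?_⟩
  · rw [one_mul]; exact hC z hz w hw
  · rintro ⟨C0, h0⟩
    refine ⟨C0 + 6 * C, fun p hp q hq x hx w hw => ?_⟩
    have h := h0 p hp.1 q hq.1 x hx.1 w hw.1
    have a1 := hlow p hp w hw
    have a2 := hlow w hw x hx
    have a3 := hlow p hp x hx
    have a4 := hlow x hx w hw
    have a5 := hlow w hw q hq
    have a6 := hlow x hx q hq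
    have b1 := hC p hp w hw
    have b2 := hC w hw x hx
    have b4 := hC x hx w hw
    have b5 := hC w hw q hq
    have b7 := hC p hp q hq
    rcases min_cases (kobayashi G p w + kobayashi G w x - kobayashi G p x)
      (kobayashi G x w + kobayashi G w q - kobayashi G x q) with ⟨e, _⟩ | ⟨e, _⟩
    · rw [e] at h
      have := min_le_left (kobayashi (G \ K) p w + kobayashi (G \ K) w x - kobayashi (G \ K) p x)
        (kobayashi (G \ K) x w + kobayashi (G \ K) w q - kobayashi (G \ K) x q)
      linarith
    · rw [e] at h
      have := min_le_right (kobayashi (G \ K) p w + kobayashi (G \ K) w x - kobayashi (G \ K) p x)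
        (kobayashi (G \ K) x w + kobayashi (G \ K) w q - kobayashi (G \ K) x q)
      linarith
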